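/- Let G be a complete multipartite graph with parts I_1, …, I_m such that |I_i| < |V(G) \ I_i| for every i. Then G has an almost-perfect matching, i.e. a matching covering every vertex of G except at most one. -/

import Mathlib

/-- A finite set of edges of `G` forming a matching (pairwise disjoint edges). -/
def IsMatchingFinset {V : Type} (G : SimpleGraph V) (M : Finset (Sym2 V)) : Prop :=
  (∀ e ∈ M, e ∈ G.edgeSet) ∧
    ∀ e ∈ M, ∀ f ∈ M, e ≠ f → ∀ v, v ∈ e → v ∉ f

/-- Inductive version of the lemma, inside a finite set `S` of vertices. -/
theorem exists_matching_aux {V : Type} [DecidableEq V]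
    (G : SimpleGraph V) (m : ℕ) (f : V → Fin m)
    (hmulti : ∀ u v, G.Adj u v ↔ f u ≠ f v) :
    ∀ (n : ℕ) (S : Finset V), S.card = n →
      (∀ i, 2 * (S.filter fun v => f v = i).card ≤ S.card + 1) →
      ∃ M : Finset (Sym2 V), IsMatchingFinset G M ∧ (∀ e ∈ M, ∀ v ∈ e, v ∈ S) ∧
        ∀ u ∈ S, ∀ v ∈ S, (∀ e ∈ M, u ∉ e) → (∀ e ∈ M, v ∉ e) → u = v := by
  intro n
  induction n using Nat.strong_induction_on with
  | _ n ih =>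
  intro S hS hbal
  by_cases h1 : S.card ≤ 1
  · refine ⟨∅, ⟨by simp, by simp⟩, by simp, ?_⟩
    intro u hu v hv _ _
    exact Finset.card_le_one.mp h1 u hu v hv
  let c : V → ℕ := fun v => (S.filter fun w => f w = f v).card
  have hne : S.Nonempty := Finset.card_pos.mp (by omega)
  obtain ⟨a, haS, ha⟩ := Finset.exists_max_image S c hne
  have hne2 : (S.filter fun v => f v ≠ f a).Nonempty := by
    rw [Finset.nonempty_iff_ne_empty]
    intro h
    have h2 := Finset.card_filter_add_card_filter_not (s := S) (fun v => f v = f a)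
    have h3 := hbal (f a)
    rw [h, Finset.card_empty] at h2
    omega
  obtain ⟨b, hbS', hb⟩ := Finset.exists_max_image _ c hne2
  obtain ⟨hbS, hba⟩ := Finset.mem_filter.mp hbS'
  have hab : a ≠ b := fun h => hba (by rw [h])
  have hbT : b ∈ S.erase a := Finset.mem_erase.mpr ⟨hab.symm, hbS⟩
  have hcard : ((S.erase a).erase b).card + 2 = S.card := by
    rw [Finset.card_erase_of_mem hbT, Finset.card_erase_of_mem haS]; omega
  obtain ⟨M, ⟨hM1, hM2⟩, hM3, hM4⟩ := ih _ (by omega) ((S.erase a).erase b) rfl (by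
    intro i
    have hi := hbal i
    by_cases hab_i : i = f a ∨ i = f b
    · have hlt : (((S.erase a).erase b).filter fun v => f v = i).card <
          (S.filter fun v => f v = i).card := by
        apply Finset.card_lt_card
        rw [Finset.ssubset_iff_of_subset (Finset.filter_subset_filter _
          ((Finset.erase_subset _ _).trans (Finset.erase_subset _ _)))]
        rcases hab_i with h | h
        · exact ⟨a, by simp [haS, h], by simp⟩
        · exact ⟨b, by simp [hbS, h], by simp⟩
      omega
    · push Not at hab_i
      have hle : (((S.erase a).erase b).filter fun v => f v = i).card ≤
          (S.filter fun v => f v = i).card :=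
        Finset.card_le_card (Finset.filter_subset_filter _
          ((Finset.erase_subset _ _).trans (Finset.erase_subset _ _)))
      rcases (S.filter fun v => f v = i).eq_empty_or_nonempty with h0 | ⟨x, hx⟩
      · rw [h0, Finset.card_empty] at hle
        omega
      obtain ⟨hxS, rfl⟩ := Finset.mem_filter.mp hx
      have hxb : c x ≤ c b := hb x (Finset.mem_filter.mpr ⟨hxS, hab_i.1⟩)
      have hb_a : c b ≤ c a := ha b hbS
      have hsum : c a + c b + c x ≤ S.card := by
        simp only [c]
        rw [← Finset.card_union_of_disjoint, ← Finset.card_union_of_disjoint]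
        · apply Finset.card_le_card
          intro v hv
          simp only [Finset.mem_union, Finset.mem_filter] at hv
          tauto
        · rw [Finset.disjoint_left]
          intro v hv hv'
          simp only [Finset.mem_union, Finset.mem_filter] at hv hv'
          grind
        · rw [Finset.disjoint_left]
          intro v hv hv'
          simp only [Finset.mem_filter] at hv hv'
          grind
      have hcx : c x = (S.filter fun v => f v = f x).card := rfl
      omega)
  refine ⟨insert s(a, b) M, ⟨?_, ?_⟩, ?_, ?_⟩
  · intro e he
    rcases Finset.mem_insert.mp he with rfl | he
    · rw [SimpleGraph.mem_edgeSet, hmulti]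
      exact fun h => hba h.symm
    · exact hM1 e he
  · have key : ∀ e ∈ M, ∀ v ∈ e, v ∉ s(a, b) := by
      intro e he v hv hv'
      have := hM3 e he v hv
      simp only [Finset.mem_erase] at this
      rw [Sym2.mem_iff] at hv'
      tauto
    intro e he g hg heg v hve hvg
    rcases Finset.mem_insert.mp he with rfl | he <;> rcases Finset.mem_insert.mp hg with rfl | hg
    · exact heg rfl
    · exact key _ hg v hvg hve
    · exact key _ he v hve hvg
    · exact hM2 e he g hg heg v hve hvg
  · intro e he v hv
    rcases Finset.mem_insert.mp he with rfl | he
    · rcases Sym2.mem_iff.mp hv with rfl | rfl <;> assumption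
    · exact Finset.mem_of_mem_erase (Finset.mem_of_mem_erase (hM3 e he v hv))
  · have key : ∀ u ∈ S, (∀ e ∈ insert s(a, b) M, u ∉ e) → u ∈ (S.erase a).erase b := by
      intro u hu h
      have := h _ (Finset.mem_insert_self _ _)
      rw [Sym2.mem_iff] at this
      simp only [Finset.mem_erase]
      tauto
    intro u hu v hv hu' hv'
    exact hM4 u (key u hu hu') v (key v hv hv')
      (fun e he => hu' e (Finset.mem_insert_of_mem he))
      (fun e he => hv' e (Finset.mem_insert_of_mem he))

/-- **Lemma.** A complete multipartite graph in which every part `I_i` satisfies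
`|I_i| < |V(G) \ I_i|` has an almost-perfect matching: a matching covering every
vertex except at most one. -/
theorem completeMultipartite_almostPerfectMatching {V : Type} [Fintype V] [DecidableEq V]
    (G : SimpleGraph V) (m : ℕ) (f : V → Fin m)
    (hmulti : ∀ u v, G.Adj u v ↔ f u ≠ f v)
    (hbal : ∀ i : Fin m, (Finset.univ.filter fun v => f v = i).card <
      (Finset.univ \ Finset.univ.filter fun v => f v = i).card) :
    ∃ M : Finset (Sym2 V), IsMatchingFinset G M ∧
      ({v : V | ∀ e ∈ M, v ∉ e} : Set V).Subsingleton := by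
  obtain ⟨M, hM, _, hM4⟩ := exists_matching_aux G m f hmulti _ Finset.univ rfl (by
    intro i
    have h := hbal i
    rw [Finset.card_sdiff_of_subset (Finset.filter_subset _ _)] at h
    omega)
  exact ⟨M, hM, fun u hu v hv => hM4 u (Finset.mem_univ _) v (Finset.mem_univ _) hu hv⟩
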